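/- Let B₀ be a ring, π a central non-zero-divisor in B₀, B = B₀[π⁻¹], and B̄ = B₀/πB₀. Let M be a finitely generated left B-module and let L₁, L₂ ⊆ M be two lattices (finitely generated B₀-submodules with B·Lᵢ = M). If L₁/πL₁ has finite length as a B̄-module, then so does L₂/πL₂, and the two reductions have isomorphic semisimplifications. -/

import Mathlib

open CategoryTheory Function

/-- Multiplication by a central element `π` as a linear endomorphism of any module. -/
def piSmul (R : Type) [Ring R] (π : R) (hc : ∀ b : R, π * b = b * π)
    (M : Type) [AddCommGroup M] [Module R M] : M →ₗ[R] M where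
  toFun m := π • m
  map_add' := by simp
  map_smul' r m := by
    simp only [RingHom.id_apply]
    rw [← mul_smul, ← mul_smul, hc]

/-- The submodule `πM` of a module `M`. -/
def piRange (R : Type) [Ring R] (π : R) (hc : ∀ b : R, π * b = b * π)
    (M : Type) [AddCommGroup M] [Module R M] : Submodule R M :=
  LinearMap.range (piSmul R π hc M)

/-- `M` admits a filtration `0 = N₀ ≤ N₁ ≤ … ≤ N_nn = M` by submodules whose successive
quotients are isomorphic to the modules `S 0, …, S (nn-1)`. -/
def HasFactors (R : Type) [Ring R] (M : Type) [AddCommGroup M] [Module R M]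
    {nn : ℕ} (S : Fin nn → ModuleCat.{0} R) : Prop :=
  ∃ N : Fin (nn + 1) → Submodule R M, N 0 = ⊥ ∧ N (Fin.last nn) = ⊤ ∧ Monotone N ∧
    ∀ i : Fin nn, Nonempty
      ((↥(N i.succ) ⧸ Submodule.comap (N i.succ).subtype (N i.castSucc)) ≃ₗ[R] S i)

/-- Two finite-length modules have isomorphic semisimplifications: they admit composition
series with the same simple factors, up to permutation and isomorphism. -/
def SameSemisimplification (R : Type) [Ring R]
    (M₁ M₂ : Type) [AddCommGroup M₁] [Module R M₁] [AddCommGroup M₂] [Module R M₂] : Prop :=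
  ∃ (nn : ℕ) (S : Fin nn → ModuleCat.{0} R), (∀ i, IsSimpleModule R (S i)) ∧
    HasFactors R M₁ S ∧ ∃ σ : Equiv.Perm (Fin nn), HasFactors R M₂ (S ∘ σ)

/-!
Replacing `L₂` by the isomorphic lattice `πᵃL₂`, one may assume `πⁿL₁ ⊆ L₂ ⊆ L₁`. Then `L₁ / πL₂`
is filtered in two ways: through `πL₁`, with graded pieces `πL₁ / πL₂` and `L₁ / πL₁`, and through
`L₂`, with graded pieces `L₂ / πL₂` and `L₁ / L₂`. All of these have finite length, because
`L₁ / L₂` is a quotient of `L₁ / πⁿL₁`. Multiplication by `π` identifies `L₁ / L₂` with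
`πL₁ / πL₂`, so by Jordan–Hölder the composition factors of these two pieces cancel.
-/

section CompositionFactors

universe u v

variable {R : Type u} [Ring R] {M N P : Type v} [AddCommGroup M] [Module R M]
  [AddCommGroup N] [Module R N] [AddCommGroup P] [Module R P]

/-- The isomorphism class of the subquotient `B / A` of a module with submodules `A ≤ B`; for
arbitrary `A` and `B` it is the class of `B / (A ⊓ B)`. -/
def subquotientClass (A B : Submodule R M) : Skeleton (ModuleCat.{v} R) :=
  toSkeleton (ModuleCat.of R (B ⧸ A.comap B.subtype))

theorem subquotientClass_eq_iff {A B : Submodule R M} {C D : Submodule R N} :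
    subquotientClass A B = subquotientClass C D ↔
      Nonempty ((B ⧸ A.comap B.subtype) ≃ₗ[R] (D ⧸ C.comap D.subtype)) :=
  toSkeleton_eq_toSkeleton_iff.trans
    ⟨fun ⟨e⟩ ↦ ⟨e.toLinearEquiv⟩, fun ⟨e⟩ ↦ ⟨e.toModuleIso⟩⟩

theorem subquotientClass_map {f : M →ₗ[R] N} (hf : Injective f) (A B : Submodule R M) :
    subquotientClass (A.map f) (B.map f) = subquotientClass A B := by
  refine (subquotientClass_eq_iff.2
    ⟨Submodule.Quotient.equiv _ _ (Submodule.equivMapOfInjective f hf B) ?_⟩).symm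
  ext ⟨_, x, hx, rfl⟩
  constructor
  · rintro ⟨y, hy, hyx⟩
    exact ⟨y, hy, congrArg Subtype.val hyx⟩
  · rintro ⟨y, hy, hyx⟩
    obtain rfl := hf hyx
    exact ⟨⟨y, hx⟩, hy, rfl⟩

theorem subquotientClass_comap {f : M →ₗ[R] N} (hf : Surjective f) (A B : Submodule R N) :
    subquotientClass (A.comap f) (B.comap f) = subquotientClass A B := by
  let g : B.comap f →ₗ[R] B ⧸ A.comap B.subtype :=
    (A.comap B.subtype).mkQ ∘ₗ f.restrict fun _ hx ↦ hx
  have hg : Surjective g := by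
    refine (Submodule.mkQ_surjective _).comp ?_
    rintro ⟨y, hy⟩
    obtain ⟨x, rfl⟩ := hf y
    exact ⟨⟨x, hy⟩, rfl⟩
  have hker : (A.comap f).comap (B.comap f).subtype = LinearMap.ker g := by
    rw [LinearMap.ker_comp, Submodule.ker_mkQ]
    rfl
  exact subquotientClass_eq_iff.2
    ⟨(Submodule.quotEquivOfEq _ _ hker).trans (g.quotKerEquivOfSurjective hg)⟩

theorem comap_covBy_comap_of_surjective {f : M →ₗ[R] N} (hf : Surjective f)
    {A B : Submodule R N} (h : A ⋖ B) : A.comap f ⋖ B.comap f := by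
  refine ⟨Submodule.comap_strictMono_of_surjective hf h.lt, fun C hAC hCB ↦ ?_⟩
  have hC : (C.map f).comap f = C := by
    rw [Submodule.comap_map_eq, sup_eq_left]
    exact (LinearMap.ker_le_comap f).trans hAC.le
  rw [← hC, Submodule.comap_lt_comap_iff_of_surjective hf] at hAC hCB
  exact h.2 hAC hCB

theorem mapQ_map_injective {f : M →ₗ[R] N} (hf : Injective f) (K : Submodule R M) :
    Injective (K.mapQ (K.map f) f (K.le_comap_map f)) := by
  rw [← LinearMap.ker_eq_bot, Submodule.ker_mapQ, Submodule.comap_map_eq_of_injective hf,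
    Submodule.mkQ_map_self]

/-- The image of a composition series under an injective linear map. -/
def mapSeries {f : M →ₗ[R] N} (hf : Injective f) (s : CompositionSeries (Submodule R M)) :
    CompositionSeries (Submodule R N) :=
  s.map ⟨Submodule.map f, Submodule.map_covBy_of_injective hf⟩

/-- The preimage of a composition series under a surjective linear map. -/
def comapSeries {f : M →ₗ[R] N} (hf : Surjective f) (s : CompositionSeries (Submodule R N)) :
    CompositionSeries (Submodule R M) :=
  s.map ⟨Submodule.comap f, comap_covBy_comap_of_surjective hf⟩

/-- The isomorphism classes of the successive quotients of a composition series, counted with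
multiplicity. -/
noncomputable def seriesFactors (s : CompositionSeries (Submodule R M)) :
    Multiset (Skeleton (ModuleCat.{v} R)) :=
  ∑ i : Fin s.length, {subquotientClass (s i.castSucc) (s i.succ)}

theorem seriesFactors_mapSeries {f : M →ₗ[R] N} (hf : Injective f)
    (s : CompositionSeries (Submodule R M)) : seriesFactors (mapSeries hf s) = seriesFactors s :=
  Finset.sum_congr rfl fun _ _ ↦ congrArg _ (subquotientClass_map hf _ _)

theorem seriesFactors_comapSeries {f : M →ₗ[R] N} (hf : Surjective f)
    (s : CompositionSeries (Submodule R N)) : seriesFactors (comapSeries hf s) = seriesFactors s :=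
  Finset.sum_congr rfl fun _ _ ↦ congrArg _ (subquotientClass_comap hf _ _)

theorem seriesFactors_smash (s t : CompositionSeries (Submodule R M)) (h : s.last = t.head) :
    seriesFactors (s.smash t h) = seriesFactors s + seriesFactors t := by
  refine (Fin.sum_univ_add (a := s.length) (b := t.length) _).trans ?_
  congr 1 <;> refine Finset.sum_congr rfl fun i _ ↦ congrArg _ ?_
  · exact congrArg₂ _ (RelSeries.smash_castAdd h i) (RelSeries.smash_succ_castAdd h i)
  · exact congrArg₂ _ (RelSeries.smash_natAdd h i) (RelSeries.smash_succ_natAdd h i)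

theorem seriesFactors_eq_of_equivalent {s t : CompositionSeries (Submodule R M)}
    (h : s.Equivalent t) : seriesFactors s = seriesFactors t := by
  obtain ⟨e, he⟩ := h
  exact Fintype.sum_equiv e _ _ fun i ↦
    congrArg _ (subquotientClass_eq_iff.2 ⟨(he i).linearEquiv⟩)

variable (R M) in
/-- `M` has a composition series whose factors, up to isomorphism and with multiplicity, form the
multiset `m`. -/
def HasCompositionFactors (m : Multiset (Skeleton (ModuleCat.{v} R))) : Prop :=
  ∃ s : CompositionSeries (Submodule R M), s.head = ⊥ ∧ s.last = ⊤ ∧ seriesFactors s = m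

theorem isFiniteLength_iff_exists_hasCompositionFactors :
    IsFiniteLength R M ↔ ∃ m, HasCompositionFactors R M m := by
  rw [isFiniteLength_iff_exists_compositionSeries]
  exact ⟨fun ⟨s, hs, hs'⟩ ↦ ⟨_, s, hs, hs', rfl⟩, fun ⟨_, s, hs, hs', _⟩ ↦ ⟨s, hs, hs'⟩⟩

namespace HasCompositionFactors

variable {m m' : Multiset (Skeleton (ModuleCat.{v} R))}

theorem unique (h : HasCompositionFactors R M m) (h' : HasCompositionFactors R M m') :
    m = m' := by
  obtain ⟨s, hs, hs', rfl⟩ := h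
  obtain ⟨t, ht, ht', rfl⟩ := h'
  exact seriesFactors_eq_of_equivalent
    (CompositionSeries.jordan_holder s t (hs.trans ht.symm) (hs'.trans ht'.symm))

theorem of_subsingleton [Subsingleton M] : HasCompositionFactors R M 0 :=
  ⟨RelSeries.singleton _ ⊥, rfl, Subsingleton.elim _ _, rfl⟩

theorem of_exact {f : M →ₗ[R] N} {g : N →ₗ[R] P} (hf : Injective f) (hg : Surjective g)
    (hfg : LinearMap.range f = LinearMap.ker g) (hM : HasCompositionFactors R M m)
    (hP : HasCompositionFactors R P m') : HasCompositionFactors R N (m + m') := by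
  obtain ⟨s, hs, hs', rfl⟩ := hM
  obtain ⟨t, ht, ht', rfl⟩ := hP
  have hconnect : (mapSeries hf s).last = (comapSeries hg t).head := by
    rw [mapSeries, comapSeries, RelSeries.last_map, RelSeries.head_map, hs', ht]
    exact (Submodule.map_top f).trans (hfg.trans (Submodule.comap_bot g).symm)
  refine ⟨(mapSeries hf s).smash (comapSeries hg t) hconnect, ?_, ?_, ?_⟩
  · rw [RelSeries.head_smash, mapSeries, RelSeries.head_map, hs]
    exact Submodule.map_bot f
  · rw [RelSeries.last_smash, comapSeries, RelSeries.last_map, ht']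
    exact Submodule.comap_top g
  · rw [seriesFactors_smash, seriesFactors_mapSeries, seriesFactors_comapSeries]

theorem quotient_map {f : M →ₗ[R] N} (hf : Injective f) {K : Submodule R M}
    (hK : HasCompositionFactors R (M ⧸ K) m)
    (hf' : HasCompositionFactors R (N ⧸ LinearMap.range f) m') :
    HasCompositionFactors R (N ⧸ K.map f) (m + m') := by
  -- The exact sequence is `0 → M / K → N / f(K) → N / f(M) → 0`.
  refine of_exact (mapQ_map_injective hf K)
    (Submodule.factor_surjective LinearMap.map_le_range) ?_ hK hf'
  rw [Submodule.range_mapQ, Submodule.ker_mapQ, Submodule.comap_id]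

theorem quotient_range_pow {p : Module.End R M} (hp : Injective p)
    (h : HasCompositionFactors R (M ⧸ LinearMap.range p) m) (n : ℕ) :
    HasCompositionFactors R (M ⧸ LinearMap.range (p ^ n)) (n • m) := by
  induction n with
  | zero =>
    have : Subsingleton (M ⧸ LinearMap.range (p ^ 0)) :=
      Submodule.Quotient.subsingleton_iff.2 LinearMap.range_id
    rw [zero_smul]
    exact of_subsingleton
  | succ n ih =>
    rw [succ_nsmul, pow_succ', Module.End.mul_eq_comp, LinearMap.range_comp]
    exact ih.quotient_map hp h

end HasCompositionFactors

theorem exists_common_compositionFactors_of_range_pow_le {p : Module.End R M} {q : Module.End R N}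
    {j : N →ₗ[R] M} (hp : Injective p) (hj : Injective j) (hpq : p ∘ₗ j = j ∘ₗ q) {n : ℕ}
    (hn : LinearMap.range (p ^ n) ≤ LinearMap.range j)
    (hlen : IsFiniteLength R (M ⧸ LinearMap.range p)) :
    ∃ m, HasCompositionFactors R (M ⧸ LinearMap.range p) m ∧
      HasCompositionFactors R (N ⧸ LinearMap.range q) m := by
  obtain ⟨a, ha⟩ := isFiniteLength_iff_exists_hasCompositionFactors.1 hlen
  obtain ⟨c, hc⟩ : ∃ c, HasCompositionFactors R (M ⧸ LinearMap.range j) c := by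
    have hpow := isFiniteLength_iff_exists_hasCompositionFactors.2 ⟨_, ha.quotient_range_pow hp n⟩
    exact isFiniteLength_iff_exists_hasCompositionFactors.1
      (hpow.of_surjective (Submodule.factor_surjective hn))
  have hpj : HasCompositionFactors R (M ⧸ (LinearMap.range q).map j) (c + a) := by
    rw [← LinearMap.range_comp, ← hpq, LinearMap.range_comp]
    exact hc.quotient_map hp ha
  obtain ⟨b, hb⟩ : ∃ b, HasCompositionFactors R (N ⧸ LinearMap.range q) b :=
    isFiniteLength_iff_exists_hasCompositionFactors.1 <|
      (isFiniteLength_iff_exists_hasCompositionFactors.2 ⟨_, hpj⟩).of_injective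
        (mapQ_map_injective hj _)
  have hab : a = b := add_left_cancel <| (hpj.unique (hb.quotient_map hj hc)).trans (add_comm b c)
  exact ⟨a, ha, hab ▸ hb⟩

end CompositionFactors

theorem exists_equiv_of_sum_singleton_eq {ι κ α : Type*} [Fintype ι] [Fintype κ] {f : ι → α}
    {g : κ → α} (h : ∑ i, ({f i} : Multiset α) = ∑ j, {g j}) : ∃ σ : κ ≃ ι, ∀ j, f (σ j) = g j := by
  classical
  have hcard (c : α) : Fintype.card {j // g j = c} = Fintype.card {i // f i = c} := by
    have hcount := congrArg (Multiset.count c) h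
    simp only [Multiset.count_sum', Multiset.count_singleton, Finset.sum_boole] at hcount
    rw [Fintype.card_subtype, Fintype.card_subtype]
    simpa only [eq_comm (a := c)] using! hcount.symm
  exact ⟨Equiv.ofFiberEquiv fun c ↦ Fintype.equivOfCardEq (hcard c), Equiv.ofFiberEquiv_map _⟩

section Reduction

variable {R M N : Type} [Ring R] [AddCommGroup M] [Module R M] [AddCommGroup N] [Module R N]

theorem HasCompositionFactors.sameSemisimplification {m : Multiset (Skeleton (ModuleCat.{0} R))}
    (hM : HasCompositionFactors R M m) (hN : HasCompositionFactors R N m) :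
    SameSemisimplification R M N := by
  obtain ⟨⟨k, A, hA⟩, hA₀, hA₁, rfl⟩ := hM
  obtain ⟨⟨l, B, hB⟩, hB₀, hB₁, hBA⟩ := hN
  obtain rfl : l = k := by simpa [seriesFactors] using congrArg Multiset.card hBA
  obtain ⟨σ, hσ⟩ := exists_equiv_of_sum_singleton_eq hBA.symm
  have hA' (i : Fin l) : A i.castSucc ⋖ A i.succ := hA i
  have hB' (i : Fin l) : B i.castSucc ⋖ B i.succ := hB i
  exact ⟨l, fun i ↦ ModuleCat.of R (A i.succ ⧸ (A i.castSucc).comap (A i.succ).subtype),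
    fun i ↦ (covBy_iff_quot_is_simple (hA' i).le).1 (hA' i),
    ⟨A, hA₀, hA₁, Fin.monotone_iff_le_succ.2 fun i ↦ (hA' i).le, fun i ↦ ⟨.refl R _⟩⟩,
    σ, ⟨B, hB₀, hB₁, Fin.monotone_iff_le_succ.2 fun i ↦ (hB' i).le,
      fun i ↦ subquotientClass_eq_iff.1 (hσ i).symm⟩⟩

theorem piSmul_pow_apply (π : R) (hc : ∀ b : R, π * b = b * π) (n : ℕ) (x : M) :
    ((piSmul R π hc M : Module.End R M) ^ n) x = π ^ n • x := by
  rw [Module.End.pow_apply]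
  exact smul_iterate_apply π n x

theorem exists_pow_smul_mem_of_fg (π : R) (hc : ∀ b : R, π * b = b * π) {K L : Submodule R M}
    (hK : K.FG) (hKL : ∀ x ∈ K, ∃ n : ℕ, π ^ n • x ∈ L) : ∃ n : ℕ, ∀ x ∈ K, π ^ n • x ∈ L := by
  obtain ⟨s, rfl⟩ := hK
  choose! k hk using fun x (hx : x ∈ s) ↦ hKL x (Submodule.subset_span hx)
  have hspan : Submodule.span R s ≤
      L.comap ((piSmul R π hc M : Module.End R M) ^ s.sup k) := by
    refine Submodule.span_le.2 fun x hx ↦ ?_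
    obtain ⟨d, hd⟩ := Nat.exists_eq_add_of_le' (Finset.le_sup (f := k) hx)
    rw [SetLike.mem_coe, Submodule.mem_comap, piSmul_pow_apply, hd, pow_add, mul_smul]
    exact L.smul_mem _ (hk x hx)
  exact ⟨s.sup k, fun x hx ↦ piSmul_pow_apply π hc _ x ▸ hspan hx⟩

theorem statement4_general (π : R) (hc : ∀ b : R, π * b = b * π) (hπ : IsSMulRegular M π)
    {L₁ L₂ : Submodule R M} (h₂₁ : ∃ n : ℕ, ∀ x ∈ L₂, π ^ n • x ∈ L₁)
    (h₁₂ : ∃ n : ℕ, ∀ x ∈ L₁, π ^ n • x ∈ L₂)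
    (hlen : IsFiniteLength R (L₁ ⧸ piRange R π hc L₁)) :
    IsFiniteLength R (L₂ ⧸ piRange R π hc L₂) ∧
      SameSemisimplification R (L₁ ⧸ piRange R π hc L₁) (L₂ ⧸ piRange R π hc L₂) := by
  obtain ⟨a, ha⟩ := h₂₁
  obtain ⟨b, hb⟩ := h₁₂
  let j : L₂ →ₗ[R] L₁ := ((piSmul R π hc M : Module.End R M) ^ a).restrict fun x hx ↦
    (piSmul_pow_apply π hc a x).symm ▸ ha x hx
  have hj_apply (x : L₂) : (j x : M) = π ^ a • (x : M) := piSmul_pow_apply π hc a (x : M)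
  have hp : Injective (piSmul R π hc L₁) := fun x y hxy ↦
    Subtype.ext (hπ (congrArg Subtype.val hxy))
  have hj : Injective j := fun x y hxy ↦ Subtype.ext <| hπ.pow a <| by
    simpa only [hj_apply] using congrArg Subtype.val hxy
  have hcomm : piSmul R π hc L₁ ∘ₗ j = j ∘ₗ piSmul R π hc L₂ :=
    LinearMap.ext fun x ↦ (j.map_smul π x).symm
  have hrange : LinearMap.range ((piSmul R π hc L₁ : Module.End R L₁) ^ (a + b)) ≤
      LinearMap.range j := by
    rintro _ ⟨x, rfl⟩
    refine ⟨⟨π ^ b • (x : M), hb x x.2⟩, Subtype.ext ?_⟩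
    rw [hj_apply, piSmul_pow_apply, L₁.coe_smul, pow_add, mul_smul]
  obtain ⟨m, hm₁, hm₂⟩ := exists_common_compositionFactors_of_range_pow_le hp hj hcomm hrange hlen
  exact ⟨isFiniteLength_iff_exists_hasCompositionFactors.2 ⟨m, hm₂⟩,
    hm₁.sameSemisimplification hm₂⟩

end Reduction

/-- Let `B₀` be a ring, `π ∈ B₀` a central non-zero-divisor,
`B = B₀[π⁻¹]`, `B̄ = B₀/πB₀`.  Let `M` be a finitely generated left `B`-module and
`L₁, L₂ ⊆ M` two lattices.  If `L₁/πL₁` has finite length then so does `L₂/πL₂`, and the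
two reductions have isomorphic semisimplifications.  (Finite length and the
semisimplifications are taken over `B₀`; since both reductions are killed by `π` this is
the same as over `B̄`.) -/
theorem statement4 (B₀ B : Type) [Ring B₀] [Ring B] (π : B₀)
    (hc : ∀ b : B₀, π * b = b * π) (hnz : ∀ a : B₀, π * a = 0 → a = 0)
    (g : B₀ →+* B) (hginj : Injective g) (hu : IsUnit (g π))
    (hgen : ∀ x : B, ∃ (b : B₀) (k : ℕ), x * (g π) ^ k = g b)
    (M : Type) [AddCommGroup M] [Module B M] [Module.Finite B M]
    [Module B₀ M] (hcompat : ∀ (b : B₀) (m : M), b • m = g b • m)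
    (L₁ L₂ : Submodule B₀ M) (hfg₁ : L₁.FG) (hfg₂ : L₂.FG)
    (hlat₁ : ∀ m : M, ∃ k : ℕ, (g π) ^ k • m ∈ L₁)
    (hlat₂ : ∀ m : M, ∃ k : ℕ, (g π) ^ k • m ∈ L₂)
    (hlen : IsFiniteLength B₀ (↥L₁ ⧸ piRange B₀ π hc ↥L₁)) :
    IsFiniteLength B₀ (↥L₂ ⧸ piRange B₀ π hc ↥L₂) ∧
    SameSemisimplification B₀
      (↥L₁ ⧸ piRange B₀ π hc ↥L₁) (↥L₂ ⧸ piRange B₀ π hc ↥L₂) := by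
  have hπ : IsSMulRegular M π := by simpa only [IsSMulRegular, hcompat] using hu.isSMulRegular M
  simp only [← map_pow, ← hcompat] at hlat₁ hlat₂
  exact statement4_general π hc hπ (exists_pow_smul_mem_of_fg π hc hfg₂ fun m _ ↦ hlat₁ m)
    (exists_pow_smul_mem_of_fg π hc hfg₁ fun m _ ↦ hlat₂ m) hlen
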